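/- arXiv:2604.10952 — 2 statements merged into one kernel-verified Lean document; each statement's English description precedes it below -/
import Mathlib

section
/- For every positive integer l with l ≥ m, the set function ψ defined on subsets P of {1,…,m} by ψ(P) = max_{γ ∈ Γ_≤((1/l)·1_P, (1/n)𝟙)} ⟨S,γ⟩ is submodular: for all subsets A, B of {1,…,m}, ψ(A ∪ B) + ψ(A ∩ B) ≤ ψ(A) + ψ(B). -/
open Finset

noncomputable section

/-- Frobenius inner product `⟨S, γ⟩ = Σ_{i,j} S_{ij} γ_{ij}`. -/
def dotS {m n : ℕ} (S γ : Fin m → Fin n → ℝ) : ℝ := ∑ i, ∑ j, S i j * γ i j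

/-- Transport polytope with equality marginals. -/
def Gamma {m n : ℕ} (μ : Fin m → ℝ) (ν : Fin n → ℝ) : Set (Fin m → Fin n → ℝ) :=
  {γ | (∀ i j, 0 ≤ γ i j) ∧ (∀ i, ∑ j, γ i j = μ i) ∧ (∀ j, ∑ i, γ i j = ν j)}

/-- Semi-relaxed transport polytope: target marginal constraint is `≤`. -/
def GammaLe {m n : ℕ} (μ : Fin m → ℝ) (ν : Fin n → ℝ) : Set (Fin m → Fin n → ℝ) :=
  {γ | (∀ i j, 0 ≤ γ i j) ∧ (∀ i, ∑ j, γ i j = μ i) ∧ (∀ j, ∑ i, γ i j ≤ ν j)}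

/-- Indicator vector of a subset `P ⊆ {1,…,m}`. -/
def indVec {m : ℕ} (P : Finset (Fin m)) : Fin m → ℝ := fun i => if i ∈ P then 1 else 0

/-- `h(P) = max_{γ ∈ Γ(1_P, (|P|/n)𝟙)} ⟨S, γ⟩`. -/
def hval {m n : ℕ} (S : Fin m → Fin n → ℝ) (P : Finset (Fin m)) : ℝ :=
  sSup (dotS S '' Gamma (indVec P) (fun _ => (P.card : ℝ) / (n : ℝ)))

/-- `f(P) = max_{γ ∈ Γ_≤(1_P, (k/n)𝟙)} ⟨S, γ⟩`. -/
def fval {m n : ℕ} (k : ℕ) (S : Fin m → Fin n → ℝ) (P : Finset (Fin m)) : ℝ :=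
  sSup (dotS S '' GammaLe (indVec P) (fun _ => (k : ℝ) / (n : ℝ)))

/-!
Linear programming duality writes the value `V μ` of the semi-relaxed transport problem with source
marginal `μ` as the minimum over prices `v ≥ 0` of `∑ j, v j * ν j + ∑ i, μ i * r i v`, where
`r i v = max_j (S i j - v j)`. Each `r i` is antitone and sends meets to joins, so that
`r i (v ⊔ w) + r i (v ⊓ w) ≤ r i v + r i w`, and the dual objective is submodular in the pair
`(μ, v)`. Given near-optimal prices `v` for `μ` and `w` for `μ'`, testing `μ ⊔ μ'` with `v ⊔ w` and
`μ ⊓ μ'` with `v ⊓ w` shows that `V` is submodular on the lattice of nonnegative marginals. The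
set function of the theorem is `V` along the lattice homomorphism `P ↦ 1_P / l`.
-/

open scoped Pointwise

section Minimax

variable {E F β : Type*} [LinearOrder β] [DenselyOrdered β]
  [TopologicalSpace E] [AddCommGroup E] [Module ℝ E] [IsTopologicalAddGroup E] [ContinuousSMul ℝ E]
  [TopologicalSpace F] [AddCommGroup F] [Module ℝ F] [IsTopologicalAddGroup F] [ContinuousSMul ℝ F]
  {X : Set E} {Y : Set F} {f : E → F → β}

theorem exists_forall_lt_of_forall_exists_lt
    (hX : X.Nonempty) (hX_compact : IsCompact X) (hX_convex : Convex ℝ X) (hY_convex : Convex ℝ Y)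
    (hf_lsc : ∀ y ∈ Y, LowerSemicontinuousOn (fun x => f x y) X)
    (hf_qconvex : ∀ y ∈ Y, QuasiconvexOn ℝ X fun x => f x y)
    (hf_usc : ∀ x ∈ X, UpperSemicontinuousOn (f x) Y)
    (hf_qconcave : ∀ x ∈ X, QuasiconcaveOn ℝ Y (f x))
    {t : β} (ht : ∀ x ∈ X, ∃ y ∈ Y, t < f x y) :
    ∃ y ∈ Y, ∀ x ∈ X, t < f x y := by
  obtain ⟨s, hs⟩ : ∃ s : Finset Y, ∀ x ∈ X, ∃ y ∈ s, t < f x y := by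
    rw [← LowerSemicontinuousOn.inter_biInter_preimage_Iic_eq_empty_iff_exists_finset
      hX_compact hf_lsc]
    refine Set.eq_empty_of_forall_notMem fun x ⟨hxX, hx⟩ => ?_
    obtain ⟨y, hyY, hy⟩ := ht x hxX
    exact hy.not_ge (Set.mem_iInter₂.1 hx y hyY)
  refine Sion.exists_lt_iInf_of_lt_iInf_of_finite hX hX_compact hf_lsc hf_qconvex hY_convex hf_usc
    hf_qconcave hX_convex (s.finite_toSet.image Subtype.val) (Subtype.coe_image_subset Y s)
    fun x hx => ?_
  obtain ⟨y, hys, hy⟩ := hs x hx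
  exact ⟨y, Set.mem_image_of_mem _ hys, hy⟩

end Minimax

section Surplus

variable {ι : Type*}

/-- The largest surplus `s j - v j` available to a buyer with valuations `s` facing prices `v`; in
optimal transport this is the conjugate (`c`-transform) of the potential `v`. -/
def maxSurplus (s v : ι → ℝ) : ℝ := ⨆ j, (s j - v j)

variable [Finite ι]

lemma sub_le_maxSurplus (s v : ι → ℝ) (j : ι) : s j - v j ≤ maxSurplus s v :=
  le_ciSup (f := fun j => s j - v j) (Set.finite_range _).bddAbove j

lemma exists_sub_eq_maxSurplus [Nonempty ι] (s v : ι → ℝ) : ∃ j, s j - v j = maxSurplus s v :=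
  exists_eq_ciSup_of_finite (f := fun j => s j - v j)

lemma antitone_maxSurplus (s : ι → ℝ) : Antitone (maxSurplus s) := fun _ _ hvw =>
  ciSup_mono (Set.finite_range _).bddAbove fun j => sub_le_sub_left (hvw j) (s j)

lemma maxSurplus_inf (s v w : ι → ℝ) :
    maxSurplus s (v ⊓ w) = maxSurplus s v ⊔ maxSurplus s w := by
  have sub_inf_eq (j : ι) : s j - (v ⊓ w) j = (s j - v j) ⊔ (s j - w j) :=
    Antitone.map_inf (f := fun x => s j - x) (fun _ _ h => sub_le_sub_left h (s j)) _ _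
  simp only [maxSurplus, sub_inf_eq]
  exact ciSup_sup_eq (Set.finite_range _).bddAbove (Set.finite_range _).bddAbove

lemma maxSurplus_sup_add_inf_le (s v w : ι → ℝ) :
    maxSurplus s (v ⊔ w) + maxSurplus s (v ⊓ w) ≤ maxSurplus s v + maxSurplus s w := by
  rw [maxSurplus_inf, ← min_add_max (maxSurplus s v)]
  gcongr
  exact (antitone_maxSurplus s).map_sup_le v w

lemma mul_maxSurplus_sup_add_inf_le (s v w : ι → ℝ) {a b : ℝ} (ha : 0 ≤ a) (hb : 0 ≤ b) :
    (a ⊔ b) * maxSurplus s (v ⊔ w) + (a ⊓ b) * maxSurplus s (v ⊓ w) ≤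
      a * maxSurplus s v + b * maxSurplus s w := by
  wlog hab : a ≤ b generalizing a b v w
  · simpa only [sup_comm, inf_comm, add_comm] using this w v hb ha (le_of_not_ge hab)
  have hsup : maxSurplus s (v ⊔ w) ≤ maxSurplus s w := antitone_maxSurplus s le_sup_right
  calc (a ⊔ b) * maxSurplus s (v ⊔ w) + (a ⊓ b) * maxSurplus s (v ⊓ w)
      = (b - a) * maxSurplus s (v ⊔ w) +
          a * (maxSurplus s (v ⊔ w) + maxSurplus s (v ⊓ w)) := by
        rw [sup_of_le_right hab, inf_of_le_left hab]
        ring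
    _ ≤ (b - a) * maxSurplus s w + a * (maxSurplus s v + maxSurplus s w) :=
        add_le_add (mul_le_mul_of_nonneg_left hsup (sub_nonneg.2 hab))
          (mul_le_mul_of_nonneg_left (maxSurplus_sup_add_inf_le s v w) ha)
    _ = a * maxSurplus s v + b * maxSurplus s w := by ring

end Surplus

section Duality

variable {m n : ℕ} {S γ : Fin m → Fin n → ℝ} {μ μ' : Fin m → ℝ} {ν v w : Fin n → ℝ}

/-- The optimal value of the semi-relaxed transport problem. Being a real supremum, it is `0` when
the problem is infeasible. -/
def transportValue (S : Fin m → Fin n → ℝ) (μ : Fin m → ℝ) (ν : Fin n → ℝ) : ℝ :=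
  sSup (dotS S '' GammaLe μ ν)

/-- The dual objective of the semi-relaxed transport problem at the prices `v` of the capacity
constraints, the optimal dual variables of the source constraints being already substituted. -/
def dualObjective (S : Fin m → Fin n → ℝ) (μ : Fin m → ℝ) (ν v : Fin n → ℝ) : ℝ :=
  ∑ j, v j * ν j + ∑ i, μ i * maxSurplus (S i) v

/-- The Lagrangian of the semi-relaxed transport problem, with multipliers `v` for the capacity
constraints only. -/
def lagrangian (S : Fin m → Fin n → ℝ) (ν : Fin n → ℝ) (γ : Fin m → Fin n → ℝ) (v : Fin n → ℝ) :
    ℝ :=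
  dotS S γ + ∑ j, v j * (ν j - ∑ i, γ i j)

/-- The transport plans with source marginal `μ` and no capacity constraint, where row `i` is the
simplex of mass `μ i`. For `μ i < 0` the row consists of nonpositive vectors. -/
def sourcePlans (n : ℕ) (μ : Fin m → ℝ) : Set (Fin m → Fin n → ℝ) :=
  Set.univ.pi fun i => μ i • stdSimplex ℝ (Fin n)

lemma isCompact_sourcePlans (n : ℕ) (μ : Fin m → ℝ) : IsCompact (sourcePlans n μ) :=
  isCompact_univ_pi fun i => (isCompact_stdSimplex ℝ (Fin n)).smul (μ i)

lemma convex_sourcePlans (n : ℕ) (μ : Fin m → ℝ) : Convex ℝ (sourcePlans n μ) :=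
  convex_pi fun i _ => (convex_stdSimplex ℝ (Fin n)).smul (μ i)

lemma mem_GammaLe_of_mem_sourcePlans (hμ : 0 ≤ μ) (hγ : γ ∈ sourcePlans n μ)
    (hcap : ∀ j, ∑ i, γ i j ≤ ν j) : γ ∈ GammaLe μ ν := by
  refine ⟨fun i j => ?_, fun i => ?_, hcap⟩ <;>
    obtain ⟨x, ⟨hx_nonneg, hx_sum⟩, hx⟩ := hγ i (Set.mem_univ i) <;>
    simp only [← hx, Pi.smul_apply, smul_eq_mul]
  · exact mul_nonneg (hμ i) (hx_nonneg j)
  · rw [← mul_sum, hx_sum, mul_one]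

lemma lagrangian_eq (S : Fin m → Fin n → ℝ) (ν : Fin n → ℝ) (γ : Fin m → Fin n → ℝ)
    (v : Fin n → ℝ) :
    lagrangian S ν γ v = ∑ j, v j * ν j + ∑ i, ∑ j, γ i j * (S i j - v j) := by
  have hcol : ∑ j, v j * ∑ i, γ i j = ∑ i, ∑ j, γ i j * v j := by
    simp only [mul_comm (v _), sum_mul]
    exact sum_comm
  simp only [lagrangian, dotS, mul_sub, sum_sub_distrib, hcol, mul_comm (S _ _)]
  ring

lemma dotS_le_lagrangian (hγ : γ ∈ GammaLe μ ν) (hv : 0 ≤ v) : dotS S γ ≤ lagrangian S ν γ v :=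
  le_add_of_nonneg_right <| sum_nonneg fun j _ => mul_nonneg (hv j) (sub_nonneg.2 (hγ.2.2 j))

lemma lagrangian_le_dualObjective (hγ : γ ∈ GammaLe μ ν) :
    lagrangian S ν γ v ≤ dualObjective S μ ν v := by
  rw [lagrangian_eq, dualObjective]
  gcongr with i
  rw [← hγ.2.1 i, sum_mul]
  exact sum_le_sum fun j _ => mul_le_mul_of_nonneg_left (sub_le_maxSurplus (S i) v j) (hγ.1 i j)

lemma dotS_le_dualObjective (hγ : γ ∈ GammaLe μ ν) (hv : 0 ≤ v) :
    dotS S γ ≤ dualObjective S μ ν v :=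
  (dotS_le_lagrangian hγ hv).trans (lagrangian_le_dualObjective hγ)

lemma exists_lagrangian_eq_dualObjective [NeZero n] (S : Fin m → Fin n → ℝ) (μ : Fin m → ℝ)
    (ν v : Fin n → ℝ) : ∃ γ ∈ sourcePlans n μ, lagrangian S ν γ v = dualObjective S μ ν v := by
  choose σ hσ using fun i => exists_sub_eq_maxSurplus (S i) v
  refine ⟨fun i => μ i • Pi.single (σ i) 1,
    fun i _ => Set.smul_mem_smul_set (single_mem_stdSimplex ℝ (σ i)), ?_⟩
  simp [lagrangian_eq, dualObjective, ← hσ, Pi.single_apply]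

lemma exists_lagrangian_lt (hμ : 0 ≤ μ) (hγ : γ ∈ sourcePlans n μ) {t : ℝ}
    (ht : ∀ γ ∈ GammaLe μ ν, dotS S γ < t) : ∃ v, 0 ≤ v ∧ lagrangian S ν γ v < t := by
  by_cases hcap : ∀ j, ∑ i, γ i j ≤ ν j
  · refine ⟨0, le_rfl, ?_⟩
    simpa [lagrangian] using ht γ (mem_GammaLe_of_mem_sourcePlans hμ hγ hcap)
  · -- A high enough price on an overloaded column makes the Lagrangian arbitrarily small.
    push Not at hcap
    obtain ⟨j, hj⟩ := hcap
    obtain ⟨c, hc⟩ := Archimedean.arch (dotS S γ - t + 1) (sub_pos.2 hj)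
    refine ⟨Pi.single j c, Pi.single_nonneg.2 c.cast_nonneg, ?_⟩
    simp only [lagrangian, Pi.single_apply, ite_mul, zero_mul, sum_ite_eq', mem_univ, if_true]
    rw [nsmul_eq_mul] at hc
    linarith

lemma concaveOn_lagrangian_plan (S : Fin m → Fin n → ℝ) (ν v : Fin n → ℝ)
    {X : Set (Fin m → Fin n → ℝ)} (hX : Convex ℝ X) :
    ConcaveOn ℝ X fun γ => lagrangian S ν γ v := by
  refine ⟨hX, fun γ _ γ' _ a b _ _ hab => le_of_eq ?_⟩
  simp only [lagrangian_eq, Pi.add_apply, Pi.smul_apply, smul_eq_mul, add_mul, sum_add_distrib,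
    mul_assoc, ← mul_sum]
  linear_combination (∑ j, v j * ν j) * hab

lemma convexOn_lagrangian_price (S : Fin m → Fin n → ℝ) (ν : Fin n → ℝ)
    (γ : Fin m → Fin n → ℝ) {Y : Set (Fin n → ℝ)} (hY : Convex ℝ Y) :
    ConvexOn ℝ Y (lagrangian S ν γ) := by
  refine ⟨hY, fun v _ w _ a b _ _ hab => le_of_eq ?_⟩
  simp only [lagrangian, Pi.add_apply, Pi.smul_apply, smul_eq_mul, add_mul, sum_add_distrib,
    mul_assoc, ← mul_sum]
  linear_combination -dotS S γ * hab

lemma continuous_lagrangian_plan (S : Fin m → Fin n → ℝ) (ν v : Fin n → ℝ) :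
    Continuous fun γ => lagrangian S ν γ v := by
  unfold lagrangian dotS
  fun_prop

lemma continuous_lagrangian_price (S : Fin m → Fin n → ℝ) (ν : Fin n → ℝ)
    (γ : Fin m → Fin n → ℝ) : Continuous (lagrangian S ν γ) := by
  unfold lagrangian
  fun_prop

lemma exists_dualObjective_lt [NeZero n] (hμ : 0 ≤ μ) {t : ℝ}
    (ht : ∀ γ ∈ GammaLe μ ν, dotS S γ < t) : ∃ v, 0 ≤ v ∧ dualObjective S μ ν v < t := by
  obtain ⟨v, hv, hlt⟩ : ∃ v ∈ Set.Ici 0, ∀ γ ∈ sourcePlans n μ, -t < -lagrangian S ν γ v := by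
    obtain ⟨γ₀, hγ₀, -⟩ := exists_lagrangian_eq_dualObjective S μ ν 0
    refine exists_forall_lt_of_forall_exists_lt ⟨γ₀, hγ₀⟩ (isCompact_sourcePlans n μ)
      (convex_sourcePlans n μ) (convex_Ici 0)
      (fun v _ =>
        (continuous_lagrangian_plan S ν v).neg.lowerSemicontinuous.lowerSemicontinuousOn _)
      (fun v _ => (concaveOn_lagrangian_plan S ν v (convex_sourcePlans n μ)).neg.quasiconvexOn)
      (fun γ _ =>
        (continuous_lagrangian_price S ν γ).neg.upperSemicontinuous.upperSemicontinuousOn _)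
      (fun γ _ => (convexOn_lagrangian_price S ν γ (convex_Ici 0)).neg.quasiconcaveOn)
      fun γ hγ => ?_
    obtain ⟨v, hv, hlt⟩ := exists_lagrangian_lt hμ hγ ht
    exact ⟨v, hv, neg_lt_neg hlt⟩
  obtain ⟨γ, hγ, heq⟩ := exists_lagrangian_eq_dualObjective S μ ν v
  exact ⟨v, hv, heq ▸ neg_lt_neg_iff.1 (hlt γ hγ)⟩

theorem isGLB_transportValue [NeZero n] (hμ : 0 ≤ μ) (hfeas : (GammaLe μ ν).Nonempty) :
    IsGLB (dualObjective S μ ν '' Set.Ici 0) (transportValue S μ ν) := by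
  have hbdd : BddAbove (dotS S '' GammaLe μ ν) :=
    ⟨dualObjective S μ ν 0, Set.forall_mem_image.2 fun γ hγ => dotS_le_dualObjective hγ le_rfl⟩
  refine ⟨Set.forall_mem_image.2 fun v hv => csSup_le (hfeas.image _) <|
    Set.forall_mem_image.2 fun γ hγ => dotS_le_dualObjective hγ hv, fun b hb => ?_⟩
  refine le_of_forall_gt fun t ht => ?_
  obtain ⟨v, hv, hlt⟩ := exists_dualObjective_lt hμ fun γ hγ =>
    (le_csSup hbdd (Set.mem_image_of_mem _ hγ)).trans_lt ht
  exact (hb (Set.mem_image_of_mem _ hv)).trans_lt hlt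

lemma dualObjective_sup_add_inf_le (S : Fin m → Fin n → ℝ) (ν v w : Fin n → ℝ)
    (hμ : 0 ≤ μ) (hμ' : 0 ≤ μ') :
    dualObjective S (μ ⊔ μ') ν (v ⊔ w) + dualObjective S (μ ⊓ μ') ν (v ⊓ w) ≤
      dualObjective S μ ν v + dualObjective S μ' ν w := by
  have hprice : ∑ j, (v ⊔ w) j * ν j + ∑ j, (v ⊓ w) j * ν j = ∑ j, v j * ν j + ∑ j, w j * ν j := by
    simp only [← sum_add_distrib, ← add_mul, Pi.sup_apply, Pi.inf_apply, max_add_min]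
  have hsurplus :
      ∑ i, (μ ⊔ μ') i * maxSurplus (S i) (v ⊔ w) + ∑ i, (μ ⊓ μ') i * maxSurplus (S i) (v ⊓ w) ≤
        ∑ i, μ i * maxSurplus (S i) v + ∑ i, μ' i * maxSurplus (S i) w := by
    simp only [← sum_add_distrib]
    exact sum_le_sum fun i _ => mul_maxSurplus_sup_add_inf_le (S i) v w (hμ i) (hμ' i)
  simp only [dualObjective]
  linarith

end Duality

section Submodularity

variable {m n : ℕ}

lemma GammaLe_nonempty_of_sum_le {μ : Fin m → ℝ} {ν : Fin n → ℝ} (hμ : 0 ≤ μ) (hν : 0 ≤ ν)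
    (hle : ∑ i, μ i ≤ ∑ j, ν j) : (GammaLe μ ν).Nonempty := by
  have hsum : 0 ≤ ∑ j, ν j := sum_nonneg fun j _ => hν j
  refine ⟨fun i j => μ i * ν j / ∑ j, ν j,
    fun i j => div_nonneg (mul_nonneg (hμ i) (hν j)) hsum, fun i => ?_, fun j => ?_⟩
  · rw [← sum_div, ← mul_sum]
    refine mul_div_cancel_of_imp fun hzero => le_antisymm ?_ (hμ i)
    exact (single_le_sum (fun i _ => hμ i) (mem_univ i)).trans (hle.trans_eq hzero)
  · rw [← sum_div, ← sum_mul, mul_comm]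
    exact div_le_of_le_mul₀ hsum (hν j) (mul_le_mul_of_nonneg_left hle (hν j))

theorem stmt_6_general [NeZero n] (S : Fin m → Fin n → ℝ) {μ μ' : Fin m → ℝ} {ν : Fin n → ℝ}
    (hμ : 0 ≤ μ) (hμ' : 0 ≤ μ') (hν : 0 ≤ ν) (hle : ∑ i, (μ ⊔ μ') i ≤ ∑ j, ν j) :
    transportValue S (μ ⊔ μ') ν + transportValue S (μ ⊓ μ') ν ≤
      transportValue S μ ν + transportValue S μ' ν := by
  have isGLB_value {η : Fin m → ℝ} (hη : 0 ≤ η) (hle_sup : η ≤ μ ⊔ μ') :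
      IsGLB (dualObjective S η ν '' Set.Ici 0) (transportValue S η ν) :=
    isGLB_transportValue hη <|
      GammaLe_nonempty_of_sum_le hη hν ((sum_le_sum fun i _ => hle_sup i).trans hle)
  have hsup := isGLB_value (le_sup_of_le_left hμ) le_rfl
  have hinf := isGLB_value (le_inf hμ hμ') (inf_le_left.trans le_sup_left)
  refine (le_isGLB_iff ((isGLB_value hμ le_sup_left).add (isGLB_value hμ' le_sup_right))).2 ?_
  rintro _ ⟨_, ⟨v, hv, rfl⟩, _, ⟨w, hw, rfl⟩, rfl⟩
  calc transportValue S (μ ⊔ μ') ν + transportValue S (μ ⊓ μ') ν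
      ≤ dualObjective S (μ ⊔ μ') ν (v ⊔ w) + dualObjective S (μ ⊓ μ') ν (v ⊓ w) :=
        add_le_add (hsup.1 ⟨v ⊔ w, Set.mem_Ici.2 (le_sup_of_le_left hv), rfl⟩)
          (hinf.1 ⟨v ⊓ w, Set.mem_Ici.2 (le_inf hv hw), rfl⟩)
    _ ≤ dualObjective S μ ν v + dualObjective S μ' ν w :=
        dualObjective_sup_add_inf_le S ν v w hμ hμ'

lemma indVec_nonneg (P : Finset (Fin m)) : 0 ≤ indVec P := fun i => by
  unfold indVec
  split_ifs <;> simp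

lemma indVec_union (P Q : Finset (Fin m)) : indVec (P ∪ Q) = indVec P ⊔ indVec Q := by
  ext i
  by_cases hP : i ∈ P <;> by_cases hQ : i ∈ Q <;> simp [indVec, hP, hQ]

lemma indVec_inter (P Q : Finset (Fin m)) : indVec (P ∩ Q) = indVec P ⊓ indVec Q := by
  ext i
  by_cases hP : i ∈ P <;> by_cases hQ : i ∈ Q <;> simp [indVec, hP, hQ]

/-- The marginal `(1/l)·1_P`. -/
def scaledIndVec (l : ℕ) (P : Finset (Fin m)) : Fin m → ℝ := fun i => indVec P i / l

lemma scaledIndVec_nonneg (l : ℕ) (P : Finset (Fin m)) : 0 ≤ scaledIndVec l P := fun i =>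
  div_nonneg (indVec_nonneg P i) l.cast_nonneg

lemma scaledIndVec_union (l : ℕ) (P Q : Finset (Fin m)) :
    scaledIndVec l (P ∪ Q) = scaledIndVec l P ⊔ scaledIndVec l Q := by
  ext i
  simp only [scaledIndVec, indVec_union, Pi.sup_apply, max_div_div_right l.cast_nonneg]

lemma scaledIndVec_inter (l : ℕ) (P Q : Finset (Fin m)) :
    scaledIndVec l (P ∩ Q) = scaledIndVec l P ⊓ scaledIndVec l Q := by
  ext i
  simp only [scaledIndVec, indVec_inter, Pi.inf_apply, min_div_div_right l.cast_nonneg]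

lemma sum_scaledIndVec_le_one {l : ℕ} (hml : m ≤ l) (P : Finset (Fin m)) :
    ∑ i, scaledIndVec l P i ≤ 1 := by
  have hcard : #P ≤ l := (card_le_univ P).trans_eq (Fintype.card_fin m) |>.trans hml
  calc ∑ i, scaledIndVec l P i = #P / l := by simp [scaledIndVec, indVec, ← sum_div]
    _ ≤ 1 := div_le_one_of_le₀ (Nat.cast_le.2 hcard) l.cast_nonneg

end Submodularity

/-- for `l ≥ m`, the set function
`ψ(P) = max_{γ ∈ Γ_≤((1/l)·1_P, (1/n)𝟙)} ⟨S,γ⟩` is submodular. -/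
theorem stmt_6 (m n : ℕ) (hm : 0 < m) (hn : 0 < n)
    (S : Fin m → Fin n → ℝ) (hS : ∀ i j, 0 ≤ S i j)
    (l : ℕ) (hl : 0 < l) (hlm : m ≤ l)
    (ψ : Finset (Fin m) → ℝ)
    (hψ : ∀ P : Finset (Fin m),
      ψ P = sSup (dotS S ''
        GammaLe (fun i => indVec P i / (l : ℝ)) (fun _ => 1 / (n : ℝ))))
    (A B : Finset (Fin m)) :
    ψ (A ∪ B) + ψ (A ∩ B) ≤ ψ A + ψ B := by
  have : NeZero n := ⟨hn.ne'⟩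
  obtain rfl : ψ = fun P => transportValue S (scaledIndVec l P) fun _ => 1 / (n : ℝ) := funext hψ
  have hle : ∑ i, (scaledIndVec l A ⊔ scaledIndVec l B) i ≤ ∑ _j : Fin n, 1 / (n : ℝ) := by
    simpa [← scaledIndVec_union, -Pi.sup_apply] using sum_scaledIndVec_le_one hlm (A ∪ B)
  simpa only [scaledIndVec_union, scaledIndVec_inter] using
    stmt_6_general S (scaledIndVec_nonneg l A) (scaledIndVec_nonneg l B)
      (fun _ => by positivity) hle
end
end

section
/- Sharpened monotonicity of f: let P ⊆ {1,…,m} with |P| < k, let i ∈ {1,…,m} with i ∉ P, let γ_P ∈ Γ_≤(1_P,(k/n)𝟙) be a coupling attaining f(P), and set v = (k/n)𝟙 − γ_Pᵀ𝟙 ∈ ℝ_{≥0}^n (whose entries sum to k − |P| ≥ 1). Then f(P ∪ {i}) ≥ f(P) + (1/(k − |P|)) · ⟨S(i,·), v⟩, where S(i,·) denotes the i-th row of S. -/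
open Finset

noncomputable section

/-! Spread a fraction `t = 1 / (k - |P|)` of the capacity left unused by `γ` over the empty row `i`.
The unused capacity has total mass `k - |P|`, so the new row has mass `1`; since `t ≤ 1`, no column
is overfilled. The enlarged plan is therefore feasible for `P ∪ {i}`, and its value exceeds that of
`γ` by `t * ⟨S(i,·), v⟩`. -/

/-- The capacity `v = ν - γᵀ𝟙` that the transport plan `γ` leaves unused in each column. -/
def slack {m n : ℕ} (ν : Fin n → ℝ) (γ : Fin m → Fin n → ℝ) (j : Fin n) : ℝ :=
  ν j - ∑ l, γ l j

section TransportPlans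

variable {m n : ℕ} {μ : Fin m → ℝ} {ν : Fin n → ℝ} {γ : Fin m → Fin n → ℝ}

lemma dotS_add (S γ γ' : Fin m → Fin n → ℝ) : dotS S (γ + γ') = dotS S γ + dotS S γ' := by
  simp only [dotS, Pi.add_apply, mul_add, sum_add_distrib]

lemma dotS_single (S : Fin m → Fin n → ℝ) (i : Fin m) (w : Fin n → ℝ) :
    dotS S (Pi.single i w) = ∑ j, S i j * w j := by
  unfold dotS
  rw [Fintype.sum_eq_single i fun l hl => by simp [hl]]
  simp only [Pi.single_eq_same]

lemma continuous_dotS (S : Fin m → Fin n → ℝ) : Continuous (dotS S) := by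
  unfold dotS
  fun_prop

lemma gammaLe_subset_Icc : GammaLe μ ν ⊆ Set.Icc 0 fun _ : Fin m => ν := by
  rintro γ ⟨nonneg, -, col_le⟩
  exact ⟨nonneg, fun l j =>
    (single_le_sum (f := fun l => γ l j) (fun a _ => nonneg a j) (mem_univ l)).trans (col_le j)⟩

lemma bddAbove_dotS_image_gammaLe (S : Fin m → Fin n → ℝ) (μ : Fin m → ℝ) (ν : Fin n → ℝ) :
    BddAbove (dotS S '' GammaLe μ ν) :=
  (isCompact_Icc.bddAbove_image (continuous_dotS S).continuousOn).mono
    (Set.image_mono gammaLe_subset_Icc)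

lemma slack_nonneg (hγ : γ ∈ GammaLe μ ν) : 0 ≤ slack ν γ :=
  fun j => sub_nonneg.2 (hγ.2.2 j)

lemma sum_slack (hγ : γ ∈ GammaLe μ ν) : ∑ j, slack ν γ j = ∑ j, ν j - ∑ l, μ l := by
  simp only [slack, sum_sub_distrib]
  rw [sum_comm, sum_congr rfl fun l _ => hγ.2.1 l]

lemma add_single_mem_gammaLe (hγ : γ ∈ GammaLe μ ν) (i : Fin m) {w : Fin n → ℝ}
    (hw : 0 ≤ w) (hwν : w ≤ slack ν γ) :
    γ + Pi.single i w ∈ GammaLe (μ + Pi.single i (∑ j, w j)) ν := by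
  refine ⟨fun l j => ?nonneg, fun l => ?row_sum, fun j => ?col_sum_le⟩
  case nonneg =>
    have single_nonneg : (0 : Fin m → Fin n → ℝ) ≤ Pi.single i w := Pi.single_nonneg.2 hw
    exact add_nonneg (hγ.1 l j) (single_nonneg l j)
  case row_sum =>
    obtain rfl | hl := eq_or_ne l i <;> simp [sum_add_distrib, hγ.2.1, *]
  case col_sum_le =>
    have col_single : ∑ l, (Pi.single i w : Fin m → Fin n → ℝ) l j = w j := by
      rw [← Finset.sum_apply, Fintype.sum_pi_single']
    simp only [Pi.add_apply, sum_add_distrib, col_single]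
    exact le_sub_iff_add_le'.1 (hwν j)

lemma sum_indVec (P : Finset (Fin m)) : ∑ i, indVec P i = P.card := by
  simp [indVec]

lemma indVec_insert {P : Finset (Fin m)} {i : Fin m} (hi : i ∉ P) :
    indVec (insert i P) = indVec P + Pi.single i 1 := by
  ext l
  obtain rfl | hl := eq_or_ne l i <;> simp [indVec, *]

lemma dotS_le_fval {k : ℕ} {P : Finset (Fin m)} (S : Fin m → Fin n → ℝ)
    (hγ : γ ∈ GammaLe (indVec P) fun _ => (k : ℝ) / n) : dotS S γ ≤ fval k S P :=
  le_csSup (bddAbove_dotS_image_gammaLe S _ _) (Set.mem_image_of_mem _ hγ)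

lemma sum_slack_indVec {k : ℕ} {P : Finset (Fin m)} (hn : 0 < n)
    (hγ : γ ∈ GammaLe (indVec P) fun _ => (k : ℝ) / n) :
    ∑ j, slack (fun _ => (k : ℝ) / n) γ j = k - P.card := by
  have hn' : (n : ℝ) ≠ 0 := by exact_mod_cast hn.ne'
  rw [sum_slack hγ, sum_indVec, Fin.sum_const, nsmul_eq_mul, mul_div_cancel₀ _ hn']

theorem stmt_9_general {k : ℕ} (hn : 0 < n) (S : Fin m → Fin n → ℝ)
    {P : Finset (Fin m)} (hP : P.card < k) {i : Fin m} (hi : i ∉ P)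
    (hγ : γ ∈ GammaLe (indVec P) fun _ => (k : ℝ) / n) :
    dotS S γ + 1 / ((k : ℝ) - P.card) * ∑ j, S i j * slack (fun _ => (k : ℝ) / n) γ j ≤
      fval k S (insert i P) := by
  set v := slack (fun _ => (k : ℝ) / n) γ
  set t : ℝ := 1 / ((k : ℝ) - P.card)
  have one_le : (1 : ℝ) ≤ k - P.card := by
    rw [le_sub_iff_add_le']
    exact_mod_cast hP
  have t_nonneg : 0 ≤ t := one_div_nonneg.2 (by linarith)
  have t_le_one : t ≤ 1 := div_le_one_of_le₀ one_le (by linarith)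
  have v_nonneg : 0 ≤ v := slack_nonneg hγ
  have row_mass : ∑ j, (t • v) j = 1 := by
    simp only [Pi.smul_apply, smul_eq_mul, ← mul_sum]
    rw [sum_slack_indVec hn hγ, one_div_mul_cancel (by linarith)]
  have feasible : γ + Pi.single i (t • v) ∈ GammaLe (indVec (insert i P)) fun _ => (k : ℝ) / n := by
    rw [indVec_insert hi, ← row_mass]
    exact add_single_mem_gammaLe hγ i (smul_nonneg t_nonneg v_nonneg)
      (smul_le_of_le_one_left v_nonneg t_le_one)
  calc dotS S γ + t * ∑ j, S i j * v j = dotS S (γ + Pi.single i (t • v)) := by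
        simp only [dotS_add, dotS_single, Pi.smul_apply, smul_eq_mul, mul_sum, mul_left_comm]
    _ ≤ fval k S (insert i P) := dotS_le_fval S feasible

end TransportPlans

/-- sharpened monotonicity of `f`: with `γ_P` attaining `f(P)` and
`v = (k/n)𝟙 − γ_Pᵀ𝟙`, one has
`f(P ∪ {i}) ≥ f(P) + (1/(k − |P|))·⟨S(i,·), v⟩`. -/
theorem stmt_9 (m n k : ℕ) (hm : 0 < m) (hn : 0 < n) (hk : 0 < k)
    (hkm : k ≤ m) (hkn : k ≤ n)
    (S : Fin m → Fin n → ℝ) (hS : ∀ i j, 0 ≤ S i j)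
    (P : Finset (Fin m)) (hP : P.card < k)
    (i : Fin m) (hi : i ∉ P)
    (γP : Fin m → Fin n → ℝ)
    (hγ : γP ∈ GammaLe (indVec P) (fun _ => (k : ℝ) / (n : ℝ)))
    (hopt : dotS S γP = fval k S P) :
    fval k S P +
      (1 / ((k : ℝ) - (P.card : ℝ))) *
        ∑ j, S i j * ((k : ℝ) / (n : ℝ) - ∑ l, γP l j) ≤
    fval k S (insert i P) := by
  rw [← hopt]
  exact stmt_9_general hn S hP hi hγ
end
end
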